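/- Let (X_t)_{t∈ℝ} be a strictly stationary ℝ^n-valued process with E[‖X_0‖^p]^{1/p} ≤ C for some constant C > 0 and some p > 1. Let h : ℝ^n → ℝ^m satisfy the growth–Lipschitz condition with constants c > 0 and a, where 1 ≤ a < p, and define Y_t = h(X_t). If (X_t)_{t∈ℝ} is θ-weakly dependent with coefficients (θ_X(r))_{r≥0}, then (Y_t)_{t∈ℝ} is θ-weakly dependent with coefficients θ_Y(r) = 𝒞 · θ_X(r)^{(p−a)/(p−1)} for some constant 𝒞 ≥ 0 independent of r. -/

import Mathlib

/-!
The covariance functional tolerates two operations on the future `Z`: a Lipschitz map multiplies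
the bound by its constant, and an `L¹`-perturbation of size `δ` adds `2δ`. A growth–Lipschitz map
`h` precomposed with the radial truncation at level `M` is Lipschitz with constant of order
`M ^ (a - 1)`, while the moment of order `p` makes the truncation error of order `M ^ (a - p)`.
Hence the bound `θ` becomes, up to constants, `M ^ (a - 1) * θ + M ^ (a - p)` for every `M ≥ 1`.
For `θ ≤ 1` the choice `M = θ ^ (-1 / (p - 1))` balances the two terms at
`θ ^ ((p - a) / (p - 1))`; for `θ ≥ 1` it is enough to compare `h` with the constant `h 0`.
-/

open MeasureTheory ProbabilityTheory Filter

noncomputable section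

/-- Covariance of two real-valued random variables. -/
def cov {Ω : Type*} [MeasurableSpace Ω] (μ : Measure Ω) (U V : Ω → ℝ) : ℝ :=
  (∫ ω, U ω * V ω ∂μ) - (∫ ω, U ω ∂μ) * (∫ ω, V ω ∂μ)

/-- `L` is a (nonnegative) Lipschitz bound for `F` with respect to the distance
`δ₁(x,y) = ∑ i ‖x i - y i‖` on `Eᵘ`. -/
def Delta1Lip {E : Type*} [NormedAddCommGroup E] {u : ℕ} (F : (Fin u → E) → ℝ) (L : ℝ) : Prop :=
  0 ≤ L ∧ ∀ x y : Fin u → E, |F x - F y| ≤ L * ∑ i, ‖x i - y i‖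

/-- θ-weak dependence of a process with coefficients `θ` and constant `c₀`: `θ r → 0` and the
covariance of a bounded measurable functional of the past and a Lipschitz functional of the
future, separated by a time gap `r`, is controlled by `c₀ v Lip(G) θ(r)`. -/
def ThetaWeaklyDependent {Ω : Type*} [MeasurableSpace Ω] (μ : Measure Ω)
    {E : Type*} [NormedAddCommGroup E] [MeasurableSpace E]
    (X : ℝ → Ω → E) (θ : ℝ → ℝ) (c₀ : ℝ) : Prop :=
  0 ≤ c₀ ∧ (∀ r, 0 ≤ θ r) ∧ Tendsto θ atTop (nhds 0) ∧
    ∀ (u v : ℕ), 0 < u → 0 < v → ∀ r : ℝ, 0 ≤ r →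
      ∀ (i : Fin u → ℝ) (j : Fin v → ℝ), Monotone i → Monotone j →
        (∀ a b, i a + r ≤ j b) →
        ∀ (F : (Fin u → E) → ℝ) (G : (Fin v → E) → ℝ) (LG : ℝ),
          Measurable F → Measurable G →
          (∀ x, |F x| ≤ 1) → (∀ x, |G x| ≤ 1) →
          Delta1Lip G LG →
          |cov μ (fun ω => F fun a => X (i a) ω) (fun ω => G fun b => X (j b) ω)| ≤
            c₀ * (v : ℝ) * LG * θ r

/-- Strict stationarity of an `ℝ`-indexed process: shifted finite-dimensional marginals have
the same distribution. -/
def StrictlyStationary {Ω : Type*} [MeasurableSpace Ω] (μ : Measure Ω)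
    {E : Type*} [MeasurableSpace E] (X : ℝ → Ω → E) : Prop :=
  ∀ (s : ℝ) (u : ℕ) (t : Fin u → ℝ),
    IdentDistrib (fun ω (a : Fin u) => X (t a + s) ω) (fun ω (a : Fin u) => X (t a) ω) μ μ

/-- The growth–Lipschitz condition with constants `c` and `a`:
`h 0 = 0` and `‖h x - h y‖ ≤ c ‖x - y‖ (1 + ‖x‖^(a-1) + ‖y‖^(a-1))`. -/
def GrowthLip {n m : ℕ} (h : EuclideanSpace ℝ (Fin n) → EuclideanSpace ℝ (Fin m))
    (c a : ℝ) : Prop :=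
  h 0 = 0 ∧ ∀ x y, ‖h x - h y‖ ≤ c * ‖x - y‖ * (1 + ‖x‖ ^ (a - 1) + ‖y‖ ^ (a - 1))

section Covariance

variable {Ω : Type*} [MeasurableSpace Ω] {μ : Measure Ω} {U V W D : Ω → ℝ}

lemma cov_sub_right (hV : Integrable V μ) (hW : Integrable W μ)
    (hUV : Integrable (fun ω => U ω * V ω) μ) (hUW : Integrable (fun ω => U ω * W ω) μ) :
    cov μ U (fun ω => V ω - W ω) = cov μ U V - cov μ U W := by
  simp only [cov, mul_sub]
  rw [integral_sub hUV hUW, integral_sub hV hW]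
  ring

lemma cov_const_right [IsProbabilityMeasure μ] (k : ℝ) : cov μ U (fun _ => k) = 0 := by
  simp [cov, integral_mul_const]

lemma abs_cov_le_two_mul_integral [IsProbabilityMeasure μ] (hU : ∀ ω, |U ω| ≤ 1)
    (hD : Integrable D μ) (hVD : ∀ ω, |V ω| ≤ D ω) :
    |cov μ U V| ≤ 2 * ∫ ω, D ω ∂μ := by
  have hUV : |∫ ω, U ω * V ω ∂μ| ≤ ∫ ω, D ω ∂μ :=
    norm_integral_le_of_norm_le (f := fun ω => U ω * V ω) hD <| .of_forall fun ω => by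
      rw [norm_mul]
      exact (mul_le_of_le_one_left (norm_nonneg _) (hU ω)).trans (hVD ω)
  have hU_int : |∫ ω, U ω ∂μ| ≤ 1 := by
    simpa using norm_integral_le_of_norm_le (f := U) (μ := μ)
      (integrable_const (1 : ℝ)) (.of_forall hU)
  have hV_int : |∫ ω, V ω ∂μ| ≤ ∫ ω, D ω ∂μ :=
    norm_integral_le_of_norm_le (f := V) hD (.of_forall hVD)
  calc |cov μ U V| ≤ |∫ ω, U ω * V ω ∂μ| + |∫ ω, U ω ∂μ| * |∫ ω, V ω ∂μ| := by
        rw [← abs_mul]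
        exact abs_sub _ _
    _ ≤ (∫ ω, D ω ∂μ) + ∫ ω, D ω ∂μ :=
        add_le_add hUV ((mul_le_of_le_one_left (abs_nonneg _) hU_int).trans hV_int)
    _ = 2 * ∫ ω, D ω ∂μ := (two_mul _).symm

lemma abs_cov_le_abs_cov_add [IsProbabilityMeasure μ]
    (hU : Measurable U) (hU1 : ∀ ω, |U ω| ≤ 1) (hV : Integrable V μ) (hW : Integrable W μ)
    (hD : Integrable D μ) (hVW : ∀ ω, |V ω - W ω| ≤ D ω) :
    |cov μ U V| ≤ |cov μ U W| + 2 * ∫ ω, D ω ∂μ := by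
  have hsub := cov_sub_right hV hW (hV.bdd_mul hU.aestronglyMeasurable (.of_forall hU1))
    (hW.bdd_mul hU.aestronglyMeasurable (.of_forall hU1))
  have hle := abs_cov_le_two_mul_integral hU1 hD hVW
  rw [hsub] at hle
  linarith [abs_sub_abs_le_abs_sub (cov μ U V) (cov μ U W)]

end Covariance

lemma Delta1Lip.comp_lipschitzWith {E F : Type*} [NormedAddCommGroup E] [NormedAddCommGroup F]
    {v : ℕ} {G : (Fin v → F) → ℝ} {L : ℝ} (hG : Delta1Lip G L) {K : NNReal} {g : E → F}
    (hg : LipschitzWith K g) : Delta1Lip (fun x => G fun b => g (x b)) (L * K) := by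
  refine ⟨mul_nonneg hG.1 K.2, fun x y => (hG.2 _ _).trans ?_⟩
  rw [mul_assoc, Finset.mul_sum _ _ (K : ℝ)]
  exact mul_le_mul_of_nonneg_left (Finset.sum_le_sum fun b _ => hg.norm_sub_le _ _) hG.1

section ThetaCoeff

variable {Ω : Type*} [MeasurableSpace Ω] {μ : Measure Ω} {v : ℕ} {U : Ω → ℝ}
  {E F : Type*} [NormedAddCommGroup E] [MeasurableSpace E]
  [NormedAddCommGroup F] [MeasurableSpace F]

/-- The θ-coefficient of the random vector `Z` relative to `U` is at most `κ`. This is the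
covariance clause of θ-weak dependence for a single past functional `U` and a single tuple of
future times; as there, `κ` is normalised by the length `v` of `Z`. -/
def ThetaCoeffLE (μ : Measure Ω) (U : Ω → ℝ) (Z : Fin v → Ω → E) (κ : ℝ) : Prop :=
  ∀ (G : (Fin v → E) → ℝ) (L : ℝ), Measurable G → (∀ x, |G x| ≤ 1) → Delta1Lip G L →
    |cov μ U (fun ω => G fun b => Z b ω)| ≤ κ * v * L

namespace ThetaCoeffLE

lemma const [IsProbabilityMeasure μ] (z : Fin v → E) :
    ThetaCoeffLE μ U (fun b _ => z b) 0 := fun G L _ _ _ => by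
  rw [cov_const_right, abs_zero, zero_mul, zero_mul]

lemma comp_lipschitzWith {Z : Fin v → Ω → E} {κ : ℝ} (hZ : ThetaCoeffLE μ U Z κ) {K : NNReal}
    {g : E → F} (hg : LipschitzWith K g) (hg_meas : Measurable g) :
    ThetaCoeffLE μ U (fun b ω => g (Z b ω)) (κ * K) := fun G L hG hG1 hGL => by
  have hG_comp : Measurable fun x : Fin v → E => G fun b => g (x b) :=
    hG.comp (by fun_prop)
  exact (hZ _ _ hG_comp (fun _ => hG1 _) (hGL.comp_lipschitzWith hg)).trans_eq (by ring)

lemma of_norm_sub_le [IsProbabilityMeasure μ] {Y Z : Fin v → Ω → E} {κ δ : ℝ}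
    {D : Fin v → Ω → ℝ} (hZ : ThetaCoeffLE μ U Z κ)
    (hU : Measurable U) (hU1 : ∀ ω, |U ω| ≤ 1)
    (hY_meas : ∀ b, Measurable (Y b)) (hZ_meas : ∀ b, Measurable (Z b))
    (hYZ : ∀ b ω, ‖Y b ω - Z b ω‖ ≤ D b ω)
    (hD : ∀ b, Integrable (D b) μ) (hDδ : ∀ b, ∫ ω, D b ω ∂μ ≤ δ) :
    ThetaCoeffLE μ U Y (κ + 2 * δ) := fun G L hG hG1 hGL => by
  have hdiff : ∀ ω, |G (fun b => Y b ω) - G (fun b => Z b ω)| ≤ L * ∑ b, D b ω := fun ω =>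
    (hGL.2 _ _).trans
      (mul_le_mul_of_nonneg_left (Finset.sum_le_sum fun b _ => hYZ b ω) hGL.1)
  have hG_int : ∀ {T : Fin v → Ω → E}, (∀ b, Measurable (T b)) →
      Integrable (fun ω => G fun b => T b ω) μ := fun hT =>
    .of_bound (hG.comp (measurable_pi_lambda _ hT)).aestronglyMeasurable 1
      (.of_forall fun _ => hG1 _)
  have hD_sum : ∫ ω, L * ∑ b, D b ω ∂μ ≤ L * (v * δ) := by
    rw [integral_const_mul, integral_finsetSum _ fun b _ => hD b]
    refine mul_le_mul_of_nonneg_left ?_ hGL.1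
    simpa using Finset.sum_le_sum fun b (_ : b ∈ Finset.univ) => hDδ b
  calc |cov μ U (fun ω => G fun b => Y b ω)|
      ≤ |cov μ U (fun ω => G fun b => Z b ω)| + 2 * ∫ ω, L * ∑ b, D b ω ∂μ :=
        abs_cov_le_abs_cov_add hU hU1 (hG_int hY_meas) (hG_int hZ_meas)
          ((integrable_finsetSum _ fun b _ => hD b).const_mul L) hdiff
    _ ≤ κ * v * L + 2 * (L * (v * δ)) := by
        gcongr
        exact hZ G L hG hG1 hGL
    _ = (κ + 2 * δ) * v * L := by ring

end ThetaCoeffLE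

end ThetaCoeff

section RadialTruncation

lemma abs_div_max_norm_sub_mul_norm_le {E : Type*} [SeminormedAddCommGroup E] {M : ℝ}
    (hM : 0 < M) (x y : E) :
    |M / max M ‖x‖ - M / max M ‖y‖| * ‖y‖ ≤ ‖x - y‖ := by
  have hx : 0 < max M ‖x‖ := lt_max_of_lt_left hM
  have hy : 0 < max M ‖y‖ := lt_max_of_lt_left hM
  have hfactor : M / max M ‖x‖ - M / max M ‖y‖ =
      (max M ‖y‖ - max M ‖x‖) * (M / max M ‖x‖ / max M ‖y‖) := by
    field_simp
  have hmax : |max M ‖y‖ - max M ‖x‖| ≤ ‖x - y‖ := by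
    rw [max_comm M, max_comm M, norm_sub_rev]
    exact (abs_max_sub_max_le_abs _ _ _).trans (abs_norm_sub_norm_le y x)
  have hratio : M / max M ‖x‖ * (‖y‖ / max M ‖y‖) ≤ 1 :=
    mul_le_one₀ (div_le_one_of_le₀ (le_max_left _ _) hx.le) (by positivity)
      (div_le_one_of_le₀ (le_max_right _ _) hy.le)
  calc |M / max M ‖x‖ - M / max M ‖y‖| * ‖y‖
      = |max M ‖y‖ - max M ‖x‖| * (M / max M ‖x‖ * (‖y‖ / max M ‖y‖)) := by
        rw [hfactor, abs_mul, abs_of_nonneg (by positivity : 0 ≤ M / max M ‖x‖ / max M ‖y‖)]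
        ring
    _ ≤ |max M ‖y‖ - max M ‖x‖| := mul_le_of_le_one_right (abs_nonneg _) hratio
    _ ≤ ‖x - y‖ := hmax

variable {E : Type*} [NormedAddCommGroup E] [NormedSpace ℝ E] {M : ℝ}

/-- Radial truncation at level `M`, that is, the radial retraction of `E` onto the closed ball of
radius `M`. Writing the scaling factor with `max` avoids a division by `‖x‖` at `x = 0`. -/
def radialTrunc (M : ℝ) (x : E) : E :=
  (M / max M ‖x‖) • x

lemma radialTrunc_of_norm_le (hM : 0 < M) {x : E} (hx : ‖x‖ ≤ M) : radialTrunc M x = x := by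
  rw [radialTrunc, max_eq_left hx, div_self hM.ne', one_smul]

lemma norm_radialTrunc_le (hM : 0 ≤ M) (x : E) : ‖radialTrunc M x‖ ≤ M := by
  rw [radialTrunc, norm_smul, Real.norm_of_nonneg (by positivity), div_mul_eq_mul_div,
    mul_div_assoc]
  exact mul_le_of_le_one_right hM (div_le_one_of_le₀ (le_max_right _ _) (by positivity))

lemma norm_sub_radialTrunc_le (hM : 0 ≤ M) (x : E) : ‖x - radialTrunc M x‖ ≤ ‖x‖ := by
  have h_le_one : M / max M ‖x‖ ≤ 1 := div_le_one_of_le₀ (le_max_left _ _) (by positivity)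
  have h_nonneg : 0 ≤ M / max M ‖x‖ := by positivity
  have h_eq : x - radialTrunc M x = (1 - M / max M ‖x‖) • x := by
    rw [radialTrunc, sub_smul, one_smul]
  rw [h_eq, norm_smul, Real.norm_of_nonneg (sub_nonneg.2 h_le_one)]
  exact mul_le_of_le_one_left (norm_nonneg x) (sub_le_self _ h_nonneg)

lemma lipschitzWith_radialTrunc (hM : 0 < M) : LipschitzWith 2 (radialTrunc M : E → E) := by
  refine LipschitzWith.of_dist_le_mul fun x y => ?_
  rw [dist_eq_norm, dist_eq_norm, NNReal.coe_ofNat]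
  have h_eq : radialTrunc M x - radialTrunc M y =
      (M / max M ‖x‖) • (x - y) + (M / max M ‖x‖ - M / max M ‖y‖) • y := by
    simp only [radialTrunc, smul_sub, sub_smul]
    abel
  have h_scaled : ‖(M / max M ‖x‖) • (x - y)‖ ≤ ‖x - y‖ := by
    rw [norm_smul, Real.norm_of_nonneg (by positivity)]
    exact mul_le_of_le_one_left (norm_nonneg _)
      (div_le_one_of_le₀ (le_max_left _ _) (by positivity))
  have h_factor : ‖(M / max M ‖x‖ - M / max M ‖y‖) • y‖ ≤ ‖x - y‖ := by
    rw [norm_smul, Real.norm_eq_abs]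
    exact abs_div_max_norm_sub_mul_norm_le hM x y
  rw [h_eq, two_mul]
  exact norm_add_le_of_le h_scaled h_factor

end RadialTruncation

/-- The growth–Lipschitz condition for a map between arbitrary normed groups, with the
conditions on the constants bundled and without the normalisation `h 0 = 0`. -/
structure GrowthLipschitzWith {E F : Type*} [NormedAddCommGroup E] [NormedAddCommGroup F]
    (c a : ℝ) (h : E → F) : Prop where
  nonneg : 0 ≤ c
  one_le : 1 ≤ a
  norm_sub_le : ∀ x y, ‖h x - h y‖ ≤ c * ‖x - y‖ * (1 + ‖x‖ ^ (a - 1) + ‖y‖ ^ (a - 1))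

namespace GrowthLipschitzWith

variable {E F : Type*} [NormedAddCommGroup E] [NormedAddCommGroup F] {c a p M : ℝ} {h : E → F}

lemma continuous (hh : GrowthLipschitzWith c a h) : Continuous h := by
  refine continuous_iff_continuousAt.2 fun x => tendsto_iff_norm_sub_tendsto_zero.2 ?_
  have hrpow : Continuous fun y : E => ‖y‖ ^ (a - 1) :=
    continuous_norm.rpow_const fun _ => Or.inr (sub_nonneg.2 hh.one_le)
  have hbound : Continuous fun y => c * ‖y - x‖ * (1 + ‖y‖ ^ (a - 1) + ‖x‖ ^ (a - 1)) := by
    fun_prop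
  have hlim := hbound.tendsto x
  simp only [sub_self, norm_zero, mul_zero, zero_mul] at hlim
  exact squeeze_zero (fun _ => norm_nonneg _) (fun y => hh.norm_sub_le y x) hlim

lemma norm_sub_le_of_norm_le (hh : GrowthLipschitzWith c a h) (hM : 1 ≤ M) {x y : E}
    (hx : ‖x‖ ≤ M) (hy : ‖y‖ ≤ M) : ‖h x - h y‖ ≤ 3 * c * M ^ (a - 1) * ‖x - y‖ := by
  have ha : 0 ≤ a - 1 := sub_nonneg.2 hh.one_le
  have hsum : 1 + ‖x‖ ^ (a - 1) + ‖y‖ ^ (a - 1) ≤ 3 * M ^ (a - 1) := by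
    linarith [Real.one_le_rpow hM ha, Real.rpow_le_rpow (norm_nonneg x) hx ha,
      Real.rpow_le_rpow (norm_nonneg y) hy ha]
  calc ‖h x - h y‖ ≤ c * ‖x - y‖ * (1 + ‖x‖ ^ (a - 1) + ‖y‖ ^ (a - 1)) := hh.norm_sub_le x y
    _ ≤ c * ‖x - y‖ * (3 * M ^ (a - 1)) :=
        mul_le_mul_of_nonneg_left hsum (mul_nonneg hh.nonneg (norm_nonneg _))
    _ = 3 * c * M ^ (a - 1) * ‖x - y‖ := by ring

lemma norm_sub_le_rpow (hh : GrowthLipschitzWith c a h) (hM : 1 ≤ M) {x y : E}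
    (hx : ‖x‖ ≤ M) (hy : ‖y‖ ≤ M) (hxy : ‖x - y‖ ≤ M) : ‖h x - h y‖ ≤ 3 * c * M ^ a := by
  have hM0 : 0 < M := zero_lt_one.trans_le hM
  have hc := hh.nonneg
  calc ‖h x - h y‖ ≤ 3 * c * M ^ (a - 1) * M :=
        (hh.norm_sub_le_of_norm_le hM hx hy).trans (by gcongr)
    _ = 3 * c * M ^ a := by rw [mul_assoc, ← Real.rpow_add_one hM0.ne', sub_add_cancel]

lemma norm_sub_zero_le (hh : GrowthLipschitzWith c a h) (hap : a ≤ p) (x : E) :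
    ‖h x - h 0‖ ≤ 3 * c * (1 + ‖x‖ ^ p) := by
  have hc := hh.nonneg
  have hM : 1 ≤ max 1 ‖x‖ := le_max_left _ _
  have hmax : max 1 ‖x‖ ^ p ≤ 1 + ‖x‖ ^ p := by
    rcases max_choice 1 ‖x‖ with h1 | hx
    · rw [h1, Real.one_rpow]
      exact le_add_of_nonneg_right (by positivity)
    · rw [hx]
      exact le_add_of_nonneg_left zero_le_one
  calc ‖h x - h 0‖ ≤ 3 * c * max 1 ‖x‖ ^ a :=
        hh.norm_sub_le_rpow hM (le_max_right _ _) (by simp) (by simp)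
    _ ≤ 3 * c * max 1 ‖x‖ ^ p := by gcongr
    _ ≤ 3 * c * (1 + ‖x‖ ^ p) := by gcongr

variable [NormedSpace ℝ E]

lemma lipschitzWith_comp_radialTrunc (hh : GrowthLipschitzWith c a h) (hM : 1 ≤ M) :
    LipschitzWith (6 * c * M ^ (a - 1)).toNNReal (fun x => h (radialTrunc M x)) := by
  have hM0 : 0 < M := zero_lt_one.trans_le hM
  have hc := hh.nonneg
  refine LipschitzWith.of_dist_le_mul fun x y => ?_
  rw [dist_eq_norm, dist_eq_norm, Real.coe_toNNReal _ (by positivity)]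
  calc ‖h (radialTrunc M x) - h (radialTrunc M y)‖
      ≤ 3 * c * M ^ (a - 1) * ‖radialTrunc M x - radialTrunc M y‖ :=
        hh.norm_sub_le_of_norm_le hM (norm_radialTrunc_le hM0.le x) (norm_radialTrunc_le hM0.le y)
    _ ≤ 3 * c * M ^ (a - 1) * (2 * ‖x - y‖) := by
        gcongr
        exact (lipschitzWith_radialTrunc hM0).norm_sub_le x y
    _ = 6 * c * M ^ (a - 1) * ‖x - y‖ := by ring

lemma norm_sub_comp_radialTrunc_le (hh : GrowthLipschitzWith c a h) (hap : a ≤ p) (hM : 1 ≤ M)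
    (x : E) : ‖h x - h (radialTrunc M x)‖ ≤ 3 * c * M ^ (a - p) * ‖x‖ ^ p := by
  have hM0 : 0 < M := zero_lt_one.trans_le hM
  have hc := hh.nonneg
  rcases le_or_gt ‖x‖ M with hx | hx
  · rw [radialTrunc_of_norm_le hM0 hx, sub_self, norm_zero]
    positivity
  · have hx0 : 0 < ‖x‖ := hM0.trans hx
    calc ‖h x - h (radialTrunc M x)‖ ≤ 3 * c * ‖x‖ ^ a :=
          hh.norm_sub_le_rpow (hM.trans hx.le) le_rfl
            ((norm_radialTrunc_le hM0.le x).trans hx.le) (norm_sub_radialTrunc_le hM0.le x)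
      _ = 3 * c * (‖x‖ ^ (a - p) * ‖x‖ ^ p) := by rw [← Real.rpow_add hx0, sub_add_cancel]
      _ ≤ 3 * c * (M ^ (a - p) * ‖x‖ ^ p) := by
          gcongr 3 * c * (?_ * _)
          exact Real.rpow_le_rpow_of_nonpos hM0 hx.le (sub_nonpos.2 hap)
      _ = 3 * c * M ^ (a - p) * ‖x‖ ^ p := by ring

end GrowthLipschitzWith

lemma GrowthLip.growthLipschitzWith {n m : ℕ}
    {h : EuclideanSpace ℝ (Fin n) → EuclideanSpace ℝ (Fin m)} {c a : ℝ} (hh : GrowthLip h c a)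
    (hc : 0 ≤ c) (ha : 1 ≤ a) : GrowthLipschitzWith c a h :=
  ⟨hc, ha, hh.2⟩

lemma le_mul_rpow_of_forall_le_rpow_add_rpow {a p θ A B Q : ℝ} (hp : 1 < p) (hap : a < p)
    (hθ0 : 0 ≤ θ) (hθ1 : θ ≤ 1)
    (hQ : ∀ M : ℝ, 1 ≤ M → Q ≤ A * M ^ (a - 1) * θ + B * M ^ (a - p)) :
    Q ≤ (A + B) * θ ^ ((p - a) / (p - 1)) := by
  have hp' : 0 < p - 1 := sub_pos.2 hp
  have hap' : 0 < p - a := sub_pos.2 hap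
  rcases hθ0.eq_or_lt with rfl | hθ
  · rw [Real.zero_rpow (div_pos hap' hp').ne', mul_zero]
    have hlim : Tendsto (fun M : ℝ => A * M ^ (a - 1) * 0 + B * M ^ (a - p)) atTop (nhds 0) := by
      simpa using (tendsto_rpow_neg_atTop hap').const_mul B
    exact ge_of_tendsto hlim ((eventually_ge_atTop 1).mono hQ)
  · -- The level `M = θ ^ (-1 / (p - 1))` solves `M ^ (a - 1) * θ = M ^ (a - p)`.
    have hM : 1 ≤ θ ^ (-1 / (p - 1)) :=
      Real.one_le_rpow_of_pos_of_le_one_of_nonpos hθ hθ1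
        (div_nonpos_of_nonpos_of_nonneg (by norm_num) hp'.le)
    have hLip : (θ ^ (-1 / (p - 1))) ^ (a - 1) * θ = θ ^ ((p - a) / (p - 1)) := by
      rw [← Real.rpow_mul hθ0, ← Real.rpow_add_one hθ.ne']
      congr 1
      field_simp
      ring
    have hTail : (θ ^ (-1 / (p - 1))) ^ (a - p) = θ ^ ((p - a) / (p - 1)) := by
      rw [← Real.rpow_mul hθ0]
      congr 1
      field_simp
      ring
    have := hQ _ hM
    rwa [mul_assoc, hLip, hTail, ← add_mul] at this

lemma StrictlyStationary.identDistrib {Ω : Type*} [MeasurableSpace Ω] {μ : Measure Ω}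
    {E : Type*} [MeasurableSpace E] {X : ℝ → Ω → E} (hX : StrictlyStationary μ X) (s t : ℝ) :
    IdentDistrib (X s) (X t) μ μ := by
  simpa only [Function.comp_def, add_sub_cancel] using
    (hX (s - t) 1 fun _ => t).comp (measurable_pi_apply (0 : Fin 1))

section Transformation

variable {Ω : Type*} [MeasurableSpace Ω] {μ : Measure Ω} [IsProbabilityMeasure μ]
  {E F : Type*} [NormedAddCommGroup E] [MeasurableSpace E] [OpensMeasurableSpace E]
  [NormedAddCommGroup F] [MeasurableSpace F] [BorelSpace F]
  {v : ℕ} {U : Ω → ℝ} {Z : Fin v → Ω → E} {h : E → F} {c a p P : ℝ}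

lemma GrowthLipschitzWith.thetaCoeffLE_of_moment (hh : GrowthLipschitzWith c a h) (hap : a ≤ p)
    (hU : Measurable U) (hU1 : ∀ ω, |U ω| ≤ 1) (hZ_meas : ∀ b, Measurable (Z b))
    (hZ_int : ∀ b, Integrable (fun ω => ‖Z b ω‖ ^ p) μ)
    (hZ_mom : ∀ b, ∫ ω, ‖Z b ω‖ ^ p ∂μ ≤ P) :
    ThetaCoeffLE μ U (fun b ω => h (Z b ω)) (6 * c * (1 + P)) := fun G L hG hG1 hGL => by
  have hc := hh.nonneg
  have hmeas := hh.continuous.measurable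
  have hD_int : ∀ b, Integrable (fun ω => 3 * c * (1 + ‖Z b ω‖ ^ p)) μ := fun b =>
    ((integrable_const 1).add (hZ_int b)).const_mul _
  have hD_le : ∀ b, ∫ ω, 3 * c * (1 + ‖Z b ω‖ ^ p) ∂μ ≤ 3 * c * (1 + P) := fun b => by
    rw [integral_const_mul, integral_add (integrable_const 1) (hZ_int b), integral_const,
      probReal_univ, one_smul]
    gcongr
    exact hZ_mom b
  exact ((ThetaCoeffLE.const fun _ => h 0).of_norm_sub_le hU hU1
    (fun b => hmeas.comp (hZ_meas b)) (fun _ => measurable_const)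
    (fun b ω => hh.norm_sub_zero_le hap (Z b ω)) hD_int hD_le G L hG hG1 hGL).trans_eq (by ring)

variable [NormedSpace ℝ E]

lemma ThetaCoeffLE.comp_growthLipschitzWith_of_one_le {M κ : ℝ} (hZ : ThetaCoeffLE μ U Z κ)
    (hh : GrowthLipschitzWith c a h) (hap : a ≤ p) (hM : 1 ≤ M)
    (hU : Measurable U) (hU1 : ∀ ω, |U ω| ≤ 1) (hZ_meas : ∀ b, Measurable (Z b))
    (hZ_int : ∀ b, Integrable (fun ω => ‖Z b ω‖ ^ p) μ)
    (hZ_mom : ∀ b, ∫ ω, ‖Z b ω‖ ^ p ∂μ ≤ P) :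
    ThetaCoeffLE μ U (fun b ω => h (Z b ω))
      (κ * (6 * c * M ^ (a - 1)) + 6 * c * P * M ^ (a - p)) := fun G L hG hG1 hGL => by
  have hc := hh.nonneg
  have hLip := hh.lipschitzWith_comp_radialTrunc hM
  have hmeas := hLip.continuous.measurable
  have hD_le : ∀ b, ∫ ω, 3 * c * M ^ (a - p) * ‖Z b ω‖ ^ p ∂μ ≤ 3 * c * M ^ (a - p) * P :=
    fun b => by
      rw [integral_const_mul]
      gcongr
      exact hZ_mom b
  have hK : ((6 * c * M ^ (a - 1)).toNNReal : ℝ) = 6 * c * M ^ (a - 1) :=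
    Real.coe_toNNReal _ (by positivity)
  exact ((hZ.comp_lipschitzWith hLip hmeas).of_norm_sub_le hU hU1
    (fun b => hh.continuous.measurable.comp (hZ_meas b)) (fun b => hmeas.comp (hZ_meas b))
    (fun b ω => hh.norm_sub_comp_radialTrunc_le hap hM (Z b ω))
    (fun b => (hZ_int b).const_mul _) hD_le G L hG hG1 hGL).trans_eq (by rw [hK]; ring)

lemma ThetaCoeffLE.comp_growthLipschitzWith {c₀ θ : ℝ} (hZ : ThetaCoeffLE μ U Z (c₀ * θ))
    (hh : GrowthLipschitzWith c a h) (hap : a < p) (hc₀ : 0 ≤ c₀) (hθ : 0 ≤ θ) (hP : 0 ≤ P)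
    (hU : Measurable U) (hU1 : ∀ ω, |U ω| ≤ 1) (hZ_meas : ∀ b, Measurable (Z b))
    (hZ_int : ∀ b, Integrable (fun ω => ‖Z b ω‖ ^ p) μ)
    (hZ_mom : ∀ b, ∫ ω, ‖Z b ω‖ ^ p ∂μ ≤ P) :
    ThetaCoeffLE μ U (fun b ω => h (Z b ω))
      (6 * c * (c₀ + P + 1) * θ ^ ((p - a) / (p - 1))) := fun G L hG hG1 hGL => by
  have hc := hh.nonneg
  have hp : 1 < p := hh.one_le.trans_lt hap
  have hL := hGL.1
  rcases le_total θ 1 with hθ1 | hθ1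
  · calc |cov μ U (fun ω => G fun b => h (Z b ω))|
        ≤ (6 * c * v * L * c₀ + 6 * c * v * L * P) * θ ^ ((p - a) / (p - 1)) :=
          le_mul_rpow_of_forall_le_rpow_add_rpow hp hap hθ hθ1 fun M hM =>
            (hZ.comp_growthLipschitzWith_of_one_le hh hap.le hM hU hU1 hZ_meas hZ_int hZ_mom
              G L hG hG1 hGL).trans_eq (by ring)
      _ = 6 * c * (c₀ + P) * θ ^ ((p - a) / (p - 1)) * v * L := by ring
      _ ≤ 6 * c * (c₀ + P + 1) * θ ^ ((p - a) / (p - 1)) * v * L := by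
          gcongr 6 * c * ?_ * _ * _ * _
          exact le_add_of_nonneg_right zero_le_one
  · have hone : 1 ≤ θ ^ ((p - a) / (p - 1)) :=
      Real.one_le_rpow hθ1 (div_nonneg (sub_nonneg.2 hap.le) (sub_nonneg.2 hp.le))
    calc |cov μ U (fun ω => G fun b => h (Z b ω))| ≤ 6 * c * (1 + P) * v * L :=
          hh.thetaCoeffLE_of_moment hap.le hU hU1 hZ_meas hZ_int hZ_mom G L hG hG1 hGL
      _ ≤ 6 * c * (c₀ + P + 1) * v * L := by
          gcongr 6 * c * ?_ * _ * _
          linarith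
      _ ≤ 6 * c * (c₀ + P + 1) * θ ^ ((p - a) / (p - 1)) * v * L := by
          gcongr ?_ * _ * _
          exact le_mul_of_one_le_right (by positivity) hone

theorem theta_hereditary_growthLip_general {X : ℝ → Ω → E} {θ : ℝ → ℝ} {c₀ : ℝ}
    (hX : ThetaWeaklyDependent μ X θ c₀) (hX_meas : ∀ t, Measurable (X t))
    (hX_int : ∀ t, Integrable (fun ω => ‖X t ω‖ ^ p) μ)
    (hX_mom : ∀ t, ∫ ω, ‖X t ω‖ ^ p ∂μ ≤ P)
    (hh : GrowthLipschitzWith c a h) (hap : a < p) :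
    ThetaWeaklyDependent μ (fun t ω => h (X t ω)) (fun r => θ r ^ ((p - a) / (p - 1)))
      (6 * c * (c₀ + P + 1)) := by
  obtain ⟨hc₀, hθ, hθ_lim, hcov⟩ := hX
  have hc := hh.nonneg
  have hP : 0 ≤ P := (integral_nonneg fun ω => by positivity).trans (hX_mom 0)
  have hβ : 0 < (p - a) / (p - 1) :=
    div_pos (sub_pos.2 hap) (sub_pos.2 (hh.one_le.trans_lt hap))
  refine ⟨by positivity, fun r => Real.rpow_nonneg (hθ r) _, ?_, ?_⟩
  · simpa only [Real.zero_rpow hβ.ne'] using hθ_lim.rpow_const (Or.inr hβ.le)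
  · intro u v hu hv r hr i j hi hj hij Φ G L hΦ hG hΦ1 hG1 hGL
    have hmeas : Measurable h := hh.continuous.measurable
    have hΦh : Measurable fun x : Fin u → E => Φ fun b => h (x b) := hΦ.comp (by fun_prop)
    have hcoeff : ThetaCoeffLE μ (fun ω => Φ fun b => h (X (i b) ω)) (fun b => X (j b))
        (c₀ * θ r) := fun G' L' hG' hG1' hGL' =>
      (hcov u v hu hv r hr i j hi hj hij _ G' L' hΦh hG' (fun _ => hΦ1 _) hG1' hGL').trans_eq
        (by ring)
    exact (hcoeff.comp_growthLipschitzWith hh hap hc₀ (hθ r) hP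
      (hΦh.comp (measurable_pi_lambda _ fun b => hX_meas (i b))) (fun _ => hΦ1 _)
      (fun b => hX_meas (j b)) (fun b => hX_int (j b)) (fun b => hX_mom (j b))
      G L hG hG1 hGL).trans_eq (by ring)

end Transformation

/-- Hereditary property of θ-weak dependence under a growth–Lipschitz transformation
(Proposition 2.14 of Curato–Stelzer). -/
theorem theta_hereditary_growthLip
    {Ω : Type*} [MeasurableSpace Ω] (μ : Measure Ω) [IsProbabilityMeasure μ]
    {n m : ℕ} (X : ℝ → Ω → EuclideanSpace ℝ (Fin n))
    (hXmeas : ∀ t, Measurable (X t))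
    (hstat : StrictlyStationary μ X)
    (p C : ℝ) (hp : 1 < p) (hC : 0 < C)
    (hint : Integrable (fun ω => ‖X 0 ω‖ ^ p) μ)
    (hmom : (∫ ω, ‖X 0 ω‖ ^ p ∂μ) ^ (1 / p) ≤ C)
    (h : EuclideanSpace ℝ (Fin n) → EuclideanSpace ℝ (Fin m))
    (c a : ℝ) (hc : 0 < c) (ha : 1 ≤ a) (hap : a < p)
    (hGL : GrowthLip h c a)
    (θX : ℝ → ℝ) (c₀ : ℝ)
    (hX : ThetaWeaklyDependent μ X θX c₀) :
    ∃ C' c₁ : ℝ, 0 ≤ C' ∧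
      ThetaWeaklyDependent μ (fun t ω => h (X t ω))
        (fun r => C' * θX r ^ ((p - a) / (p - 1))) c₁ := by
  have hnorm t : IdentDistrib (fun ω => ‖X t ω‖ ^ p) (fun ω => ‖X 0 ω‖ ^ p) μ μ :=
    (hstat.identDistrib t 0).comp (measurable_norm.pow_const p)
  exact ⟨1, _, zero_le_one, by
    simpa only [one_mul] using theta_hereditary_growthLip_general hX hXmeas
      (fun t => (hnorm t).integrable_iff.2 hint) (fun t => (hnorm t).integral_eq.le)
      (hGL.growthLipschitzWith hc.le ha) hap⟩

end
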